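/- Let n ≥ 2 and let c : S_n × S_n → Z/2Z be defined by s(x)·s(y) = z^{c(x,y)}·s(x·y). Then c is a normalized 2-cocycle: for all x, y, w ∈ S_n one has c(x,y) + c(x·y, w) = c(y,w) + c(x, y·w) in Z/2Z; moreover c(1, x) = c(x, 1) = 0 for all x, and c(t, t) = 1 for every transposition t ∈ S_n. -/

import Mathlib

open Equiv
open scoped Classical

/-- Generator `z` as an element of the free group. -/
def zF (n : ℕ) : FreeGroup (Fin (n-1) ⊕ Unit) := FreeGroup.of (Sum.inr ())

/-- Generator `τ̃ᵢ` as an element of the free group. -/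
def tF (n : ℕ) (i : Fin (n-1)) : FreeGroup (Fin (n-1) ⊕ Unit) := FreeGroup.of (Sum.inl i)

/-- Relations of the spin extension of the symmetric group. -/
def spinRels (n : ℕ) : Set (FreeGroup (Fin (n-1) ⊕ Unit)) :=
  {zF n * zF n} ∪
  {w | ∃ i : Fin (n-1), w = zF n * tF n i * (tF n i * zF n)⁻¹} ∪
  {w | ∃ i : Fin (n-1), w = tF n i * tF n i * (zF n)⁻¹} ∪
  {w | ∃ i j : Fin (n-1), 1 < |(i : ℤ) - (j : ℤ)| ∧ w = tF n i * tF n j * (zF n * tF n j * tF n i)⁻¹} ∪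
  {w | ∃ i j : Fin (n-1), (j : ℕ) = (i : ℕ) + 1 ∧
        w = tF n i * tF n j * tF n i * (tF n j * tF n i * tF n j)⁻¹}

/-- The spin extension `S̃ₙ` of the symmetric group, as a presented group. -/
abbrev SpinSym (n : ℕ) := PresentedGroup (spinRels n)

/-- The central element `z` of `S̃ₙ`. -/
def zt (n : ℕ) : SpinSym n := PresentedGroup.of (Sum.inr ())

/-- The generator `τ̃ᵢ` of `S̃ₙ`. -/
def tt (n : ℕ) (i : Fin (n-1)) : SpinSym n := PresentedGroup.of (Sum.inl i)

/-- `i` as an element of `Fin n`. -/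
def finL (n : ℕ) (i : Fin (n-1)) : Fin n := ⟨i, by have := i.2; omega⟩

/-- `i+1` as an element of `Fin n`. -/
def finR (n : ℕ) (i : Fin (n-1)) : Fin n := ⟨(i : ℕ) + 1, by have := i.2; omega⟩

/-- `τ̃ₖ` for a natural number index, `1` out of range. -/
def ttN (n : ℕ) (k : ℕ) : SpinSym n := if h : k < n - 1 then tt n ⟨k, h⟩ else 1

/-- For `i ≤ j`, the word `τ̃ᵢ·τ̃ᵢ₊₁⋯τ̃ⱼ₋₂·τ̃ⱼ₋₁·τ̃ⱼ₋₂⋯τ̃ᵢ₊₁·τ̃ᵢ` (equal to `1` when `i = j`). -/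
def ttilCore (n i j : ℕ) : SpinSym n :=
  (((List.range' i (j - i)) ++ (List.range' i (j - 1 - i)).reverse).map (ttN n)).prod

/-- The lifted transpositions `τ̃_{i,j}`, with `τ̃_{j,i} = z·τ̃_{i,j}` for `i < j`,
and `τ̃_{k,k} = 1`. -/
def ttil (n i j : ℕ) : SpinSym n := if j < i then zt n * ttilCore n j i else ttilCore n i j

/-- `i` is the sequence of indices of a factorization of `x` as a product of
transpositions `t_{i_0,0} ⋯ t_{i_{n-1},n-1}` with `i_k ≤ k`. -/
def IsFactorization (n : ℕ) (x : Equiv.Perm (Fin n)) (i : Fin n → Fin n) : Prop :=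
  (∀ k, i k ≤ k) ∧ x = ((List.finRange n).map (fun k => Equiv.swap (i k) k)).prod

/-- The section `s : Sₙ → S̃ₙ`, defined from the unique factorization
`x = t_{i_0,0} ⋯ t_{i_{n-1},n-1}` by `s x = τ̃_{i_0,0} ⋯ τ̃_{i_{n-1},n-1}`. -/
noncomputable def sec (n : ℕ) (x : Equiv.Perm (Fin n)) : SpinSym n :=
  if h : ∃ i, IsFactorization n x i then
    ((List.finRange n).map (fun k => ttil n (h.choose k).val k.val)).prod
  else 1

/-- The `2`-cocycle `c : Sₙ × Sₙ → ℤ/2ℤ` defined by `s(x)·s(y) = z^{c(x,y)}·s(x·y)`. -/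
noncomputable def coc (n : ℕ) (x y : Equiv.Perm (Fin n)) : ZMod 2 :=
  if sec n x * sec n y = sec n (x * y) then 0 else 1

/-!
The Clifford algebra of the `A`-type root form represents `τ̃ₖ` by the simple root `αₖ` and `z` by
`-1`, so `z ≠ 1`. Killing `z` leaves the Coxeter relations, which present `Sₙ`: by induction on
the number of generators, every element is a product of an element of the parabolic subgroup and
a coset representative, and the image in `Sₙ` determines the representative, since the parabolic
subgroup fixes the last point. Hence `ker p = {1, z}`.

As `s` is a section of `p`, the products `s x * s y` and `s (x * y)` differ by a power of `z`, and
associativity of `s x * s y * s w` is the cocycle identity. A lift of a transposition is, up to the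
factor `z`, conjugate to `τ̃₀`, so it squares to `z` while `s 1 = 1`.
-/

open Equiv.Perm (viaEmbeddingHom)

section Factorization

variable {α : Type*} [LinearOrder α]

lemma prod_map_swap_apply_of_forall_lt {l : List α} {i : α → α} (hi : ∀ k, i k ≤ k) {a : α}
    (ha : ∀ k ∈ l, k < a) : (l.map fun k => swap (i k) k).prod a = a := by
  induction l with
  | nil => simp
  | cons b l ih =>
    have hb : b < a := ha b List.mem_cons_self
    rw [List.map_cons, List.prod_cons, Perm.mul_apply,
      ih fun k hk => ha k (List.mem_cons_of_mem _ hk),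
      swap_apply_of_ne_of_ne ((hi b).trans_lt hb).ne' hb.ne']

lemma eq_of_prod_map_swap_eq {l : List α} (hl : l.Pairwise (· < ·)) {i j : α → α}
    (hi : ∀ k, i k ≤ k) (hj : ∀ k, j k ≤ k)
    (h : (l.map fun k => swap (i k) k).prod = (l.map fun k => swap (j k) k).prod) :
    ∀ k ∈ l, i k = j k := by
  induction l using List.reverseRecOn with
  | nil => simp
  | append_singleton l a ih =>
    obtain ⟨hl, -, hla⟩ := List.pairwise_append.1 hl
    have hlt : ∀ k ∈ l, k < a := fun k hk => hla k hk a (List.mem_singleton_self a)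
    simp only [List.map_append, List.prod_append, List.map_singleton, List.prod_singleton] at h
    -- The product sends `i a` to the largest element `a`, so it determines `i a`.
    have ha : i a = j a := by
      apply ((l.map fun k => swap (j k) k).prod * swap (j a) a).injective
      rw [← h, Perm.mul_apply, swap_apply_left, prod_map_swap_apply_of_forall_lt hi hlt, h,
        Perm.mul_apply, swap_apply_left, prod_map_swap_apply_of_forall_lt hj hlt]
    rw [ha] at h
    intro k hk
    rcases List.mem_append.1 hk with hk | hk
    · exact ih hl (mul_right_cancel h) k hk
    · rwa [List.mem_singleton.1 hk]

lemma exists_eq_prod_map_swap {l : List α} (hl : l.Pairwise (· < ·)) {x : Perm α}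
    (hx : ∀ a ∉ l, x a = a) :
    ∃ i : α → α, (∀ k, i k ≤ k) ∧ x = (l.map fun k => swap (i k) k).prod := by
  induction l using List.reverseRecOn generalizing x with
  | nil => exact ⟨id, fun _ => le_rfl, Equiv.ext fun a => by simpa using hx a⟩
  | append_singleton l a ih =>
    obtain ⟨hl, -, hla⟩ := List.pairwise_append.1 hl
    have hlt : ∀ k ∈ l, k < a := fun k hk => hla k hk a (List.mem_singleton_self a)
    have hal : a ∉ l := fun h => (hlt a h).false
    obtain ⟨b, hb⟩ := x.surjective a
    have hba : b ∈ l ∨ b = a := by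
      by_contra! hb'
      exact hb'.2 ((hx b (by simp [hb'])).symm.trans hb)
    have hfix : ∀ c ∉ l, (x * swap b a) c = c := by
      intro c hc
      rcases eq_or_ne c a with rfl | hca
      · simpa using hb
      · have hxc : x c = c := hx c (by simp [hc, hca])
        have hcb : c ≠ b := by
          rintro rfl
          exact hca (hxc.symm.trans hb)
        rw [Perm.mul_apply, swap_apply_of_ne_of_ne hcb hca, hxc]
    obtain ⟨i, hi, hprod⟩ := ih hl hfix
    refine ⟨Function.update i a b, fun k => ?_, ?_⟩
    · rcases eq_or_ne k a with rfl | hk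
      · rw [Function.update_self]
        exact hba.elim (fun h => (hlt b h).le) le_of_eq
      · rw [Function.update_of_ne hk]
        exact hi k
    · have hcongr : (l.map fun k => swap (Function.update i a b k) k) =
          l.map fun k => swap (i k) k :=
        List.map_congr_left fun k hk => by rw [Function.update_of_ne (hlt k hk).ne]
      rw [List.map_append, List.prod_append, hcongr, ← hprod, List.map_singleton,
        List.prod_singleton, Function.update_self, mul_assoc, swap_mul_self, mul_one]

end Factorization

section CocycleOfSection

/-- Both sides of the cocycle identity measure `s x * s y * s w` against `s (x * y * w)`. -/
lemma cocycle_of_section {X G A : Type*} [Semigroup X] [Semigroup G] [IsRightCancelMul G] [Add A]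
    {ζ : A → G} (ζ_add : ∀ a b, ζ (a + b) = ζ a * ζ b) (ζ_inj : Function.Injective ζ)
    (ζ_comm : ∀ a g, Commute (ζ a) g) {s : X → G} {c : X → X → A}
    (hs : ∀ x y, s x * s y = ζ (c x y) * s (x * y)) (x y w : X) :
    c x y + c (x * y) w = c y w + c x (y * w) := by
  refine ζ_inj (mul_right_cancel (b := s (x * y * w)) ?_)
  calc ζ (c x y + c (x * y) w) * s (x * y * w)
      = s x * s y * s w := by rw [ζ_add, mul_assoc, ← hs, ← mul_assoc, ← hs]
    _ = ζ (c y w) * (s x * s (y * w)) := by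
      rw [mul_assoc, hs y w, ← mul_assoc, ← (ζ_comm _ (s x)).eq, mul_assoc]
    _ = ζ (c y w + c x (y * w)) * s (x * y * w) := by
      rw [hs, ζ_add, mul_assoc, mul_assoc x y w]

end CocycleOfSection

/-- The defining relations of the spin extension, for a candidate central element `z` and a
sequence `t` of which only `t 0, …, t (N - 1)` matter. For `z = 1` they are the Coxeter relations
of type `A`. -/
structure SpinRelations {G : Type*} [Group G] (z : G) (t : ℕ → G) (N : ℕ) : Prop where
  z_mul_z : z * z = 1
  z_comm : ∀ k < N, z * t k = t k * z
  sq : ∀ k < N, t k * t k = z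
  far : ∀ k l, k + 1 < l → l < N → t k * t l = z * t l * t k
  braid : ∀ k, k + 1 < N → t k * t (k + 1) * t k = t (k + 1) * t k * t (k + 1)

section Coxeter

variable {G : Type*} [Group G]

/-- The product `t (i + d - 1) * ⋯ * t (i + 1) * t i` of `d` consecutive generators. With
`i + d = N`, these are the minimal right coset representatives of the parabolic subgroup
`⟨t 0, …, t (N - 2)⟩` of `⟨t 0, …, t (N - 1)⟩`. -/
def descProd (t : ℕ → G) (i d : ℕ) : G := ((List.range' i d).reverse.map t).prod

lemma descProd_zero (t : ℕ → G) (i : ℕ) : descProd t i 0 = 1 := rfl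

lemma descProd_succ (t : ℕ → G) (i d : ℕ) :
    descProd t i (d + 1) = t (i + d) * descProd t i d := by
  simp [descProd, List.range'_concat]

lemma descProd_succ' (t : ℕ → G) (i d : ℕ) :
    descProd t i (d + 1) = descProd t (i + 1) d * t i := by
  simp [descProd, List.range'_succ]

namespace SpinRelations

variable {z : G} {t : ℕ → G} {M N : ℕ}

lemma mono (ht : SpinRelations z t N) (hMN : M ≤ N) : SpinRelations z t M where
  z_mul_z := ht.z_mul_z
  z_comm k hk := ht.z_comm k (hk.trans_le hMN)
  sq k hk := ht.sq k (hk.trans_le hMN)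
  far k l hkl hl := ht.far k l hkl (hl.trans_le hMN)
  braid k hk := ht.braid k (hk.trans_le hMN)

lemma map {H : Type*} [Group H] (ht : SpinRelations z t N) (f : G →* H) :
    SpinRelations (f z) (f ∘ t) N where
  z_mul_z := by rw [← map_mul, ht.z_mul_z, map_one]
  z_comm k hk := by simp only [Function.comp_apply, ← map_mul, ht.z_comm k hk]
  sq k hk := by simp only [Function.comp_apply, ← map_mul, ht.sq k hk]
  far k l hkl hl := by simp only [Function.comp_apply, ← map_mul, ht.far k l hkl hl]
  braid k hk := by simp only [Function.comp_apply, ← map_mul, ht.braid k hk]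

lemma far_of_one_lt_abs (ht : SpinRelations z t N) {k l : ℕ} (hk : k < N) (hl : l < N)
    (h : 1 < |(k : ℤ) - l|) : t k * t l = z * t l * t k := by
  rcases lt_abs.1 h with h | h
  · rw [mul_assoc, ht.far l k (by omega) hk, mul_assoc z, ← mul_assoc, ht.z_mul_z, one_mul]
  · exact ht.far k l (by omega) hl

lemma commute (ht : SpinRelations 1 t N) {k l : ℕ} (hkl : k + 1 < l) (hl : l < N) :
    Commute (t k) (t l) :=
  (ht.far k l hkl hl).trans (by rw [one_mul])

lemma commute_descProd (ht : SpinRelations 1 t N) {i d l : ℕ} (hd : i + d ≤ N) (hl : l < N)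
    (h : l + 1 < i ∨ i + d < l) : Commute (descProd t i d) (t l) := by
  induction d with
  | zero => exact Commute.one_left _
  | succ d ih =>
    rw [descProd_succ]
    refine Commute.mul_left ?_ (ih (by omega) (by omega))
    rcases h with h | h
    · exact (ht.commute (by omega) (by omega)).symm
    · exact ht.commute (by omega) hl

lemma descProd_mul_generator (ht : SpinRelations 1 t N) {i d l : ℕ} (hd : i + d ≤ N) (hil : i ≤ l)
    (hl : l + 1 < i + d) : descProd t i d * t (l + 1) = t l * descProd t i d := by
  induction d with
  | zero => omega
  | succ d ih =>
    rcases Nat.lt_or_ge (l + 1) (i + d) with h | h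
    · rw [descProd_succ, mul_assoc, ih (by omega) h, ← mul_assoc, ← mul_assoc,
        (ht.commute h (by omega)).eq]
    · obtain ⟨e, rfl⟩ : ∃ e, d = e + 1 := ⟨d - 1, by omega⟩
      obtain rfl : l = i + e := by omega
      have hcomm : Commute (descProd t i e) (t (i + e + 1)) :=
        ht.commute_descProd (by omega) (by omega) (Or.inr (by omega))
      calc descProd t i (e + 1 + 1) * t (i + e + 1)
          = t (i + e + 1) * t (i + e) * (descProd t i e * t (i + e + 1)) := by
            rw [descProd_succ, descProd_succ, ← add_assoc]; simp only [mul_assoc]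
        _ = t (i + e + 1) * t (i + e) * t (i + e + 1) * descProd t i e := by
            rw [hcomm.eq, ← mul_assoc]
        _ = t (i + e) * t (i + e + 1) * t (i + e) * descProd t i e := by
            rw [ht.braid (i + e) (by omega)]
        _ = t (i + e) * descProd t i (e + 1 + 1) := by
            rw [descProd_succ, descProd_succ, ← add_assoc]; simp only [mul_assoc]

lemma exists_descProd_mul_eq (ht : SpinRelations 1 t (N + 1)) {i d l : ℕ} (hid : i + d = N + 1)
    (hl : l < N + 1) :
    ∃ h ∈ Subgroup.closure (t '' Set.Iio N), ∃ j e, j + e = N + 1 ∧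
      descProd t i d * t l = h * descProd t j e := by
  have hmem : ∀ k < N, t k ∈ Subgroup.closure (t '' Set.Iio N) := fun k hk =>
    Subgroup.subset_closure ⟨k, hk, rfl⟩
  obtain hli | rfl | rfl | hli : l + 1 < i ∨ l + 1 = i ∨ l = i ∨ i < l := by omega
  · exact ⟨t l, hmem l (by omega), i, d, hid,
      (ht.commute_descProd hid.le hl (Or.inl hli)).eq⟩
  · exact ⟨1, one_mem _, l, d + 1, by omega, by rw [descProd_succ', one_mul]⟩
  · obtain ⟨e, rfl⟩ : ∃ e, d = e + 1 := ⟨d - 1, by omega⟩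
    refine ⟨1, one_mem _, l + 1, e, by omega, ?_⟩
    rw [descProd_succ', mul_assoc, ht.sq l hl, mul_one, one_mul]
  · obtain ⟨k, rfl⟩ : ∃ k, l = k + 1 := ⟨l - 1, by omega⟩
    exact ⟨t k, hmem k (by omega), i, d, hid,
      ht.descProd_mul_generator hid.le (by omega) (by omega)⟩

lemma exists_eq_mul_descProd (ht : SpinRelations 1 t (N + 1)) {g : G}
    (hg : g ∈ Subgroup.closure (t '' Set.Iio (N + 1))) :
    ∃ h ∈ Subgroup.closure (t '' Set.Iio N), ∃ i d, i + d = N + 1 ∧ g = h * descProd t i d := by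
  have mul_generator : ∀ x : G, ∀ l < N + 1,
      (∃ h ∈ Subgroup.closure (t '' Set.Iio N), ∃ i d, i + d = N + 1 ∧ x = h * descProd t i d) →
      ∃ h ∈ Subgroup.closure (t '' Set.Iio N), ∃ i d,
        i + d = N + 1 ∧ x * t l = h * descProd t i d := by
    rintro _ l hl ⟨h, hh, i, d, hid, rfl⟩
    obtain ⟨h', hh', j, e, hje, heq⟩ := ht.exists_descProd_mul_eq hid hl
    exact ⟨h * h', mul_mem hh hh', j, e, hje, by rw [mul_assoc, heq, mul_assoc]⟩
  induction hg using Subgroup.closure_induction_right with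
  | one => exact ⟨1, one_mem _, N + 1, 0, rfl, by rw [descProd_zero, mul_one]⟩
  | mul_right x _ y hy ih =>
    obtain ⟨l, hl, rfl⟩ := hy
    exact mul_generator x l hl ih
  | mul_inv_cancel x _ y hy ih =>
    obtain ⟨l, hl, rfl⟩ := hy
    rw [inv_eq_of_mul_eq_one_left (ht.sq l hl)]
    exact mul_generator x l hl ih

end SpinRelations

section AdjacentSwaps

variable {t : ℕ → G} {N : ℕ} {p : G →* Perm ℕ}

lemma map_descProd_apply_self {i d : ℕ} (hid : i + d ≤ N)
    (hp : ∀ k < N, p (t k) = swap k (k + 1)) : p (descProd t i d) i = i + d := by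
  induction d with
  | zero => rw [descProd_zero, map_one, Perm.one_apply, add_zero]
  | succ d ih =>
    rw [descProd_succ, map_mul, Perm.mul_apply, ih (by omega), hp _ (by omega), swap_apply_left,
      add_assoc]

lemma map_apply_eq_self_of_mem_closure {a : ℕ} (ha : N < a)
    (hp : ∀ k < N, p (t k) = swap k (k + 1)) {g : G}
    (hg : g ∈ Subgroup.closure (t '' Set.Iio N)) : p g a = a := by
  suffices h : Subgroup.closure (t '' Set.Iio N) ≤
      (MulAction.stabilizer (Perm ℕ) a).comap p from h hg
  rw [Subgroup.closure_le]
  rintro _ ⟨k, hk, rfl⟩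
  have hk : k < N := hk
  change p (t k) a = a
  rw [hp k hk, swap_apply_of_ne_of_ne (by omega) (by omega)]

/-- With `spinRelations_swap`, this says that the Coxeter relations present the symmetric group. -/
lemma SpinRelations.eq_one_of_map_eq_one (ht : SpinRelations 1 t N)
    (hp : ∀ k < N, p (t k) = swap k (k + 1)) {g : G}
    (hg : g ∈ Subgroup.closure (t '' Set.Iio N)) (hpg : p g = 1) : g = 1 := by
  induction N generalizing g with
  | zero => simpa [Set.Iio_eq_empty_iff.2] using hg
  | succ N ih =>
    obtain ⟨h, hh, i, d, hid, rfl⟩ := ht.exists_eq_mul_descProd hg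
    have hp' : ∀ k < N, p (t k) = swap k (k + 1) := fun k hk => hp k (by omega)
    have hi : i = N + 1 :=
      calc i = p (h * descProd t i d) i := by rw [hpg, Perm.one_apply]
        _ = p h (N + 1) := by rw [map_mul, Perm.mul_apply, map_descProd_apply_self hid.le hp, hid]
        _ = N + 1 := map_apply_eq_self_of_mem_closure N.lt_succ_self hp' hh
    obtain rfl : d = 0 := by omega
    rw [descProd_zero, mul_one] at hpg ⊢
    exact ih (ht.mono N.le_succ) hp' hh hpg

lemma spinRelations_swap (N : ℕ) : SpinRelations 1 (fun k : ℕ => swap k (k + 1)) N where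
  z_mul_z := one_mul 1
  z_comm k _ := by rw [one_mul, mul_one]
  sq k _ := swap_mul_self k (k + 1)
  far k l hkl _ := by
    rw [one_mul]
    refine (Perm.Disjoint.commute fun a => ?_).eq
    by_cases ha : a = k ∨ a = k + 1
    · exact Or.inr (swap_apply_of_ne_of_ne (by omega) (by omega))
    · exact Or.inl (swap_apply_of_ne_of_ne (by omega) (by omega))
  braid k _ := by
    rw [swap_mul_swap_mul_swap (by omega) (by omega), swap_comm k (k + 1),
      swap_comm (k + 1) (k + 1 + 1), swap_mul_swap_mul_swap (by omega) (by omega), swap_comm]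

end AdjacentSwaps

end Coxeter

section Clifford

open CliffordAlgebra

lemma mul_mul_eq_of_add_swap_eq_one {R : Type*} [Ring R] {u v : R} (hu : u * u = -1)
    (hv : v * v = -1) (huv : u * v + v * u = 1) : u * v * u = v * u * v := by
  calc u * v * u = u * (v * u) := mul_assoc u v u
    _ = u + v := by rw [eq_sub_of_add_eq' huv, mul_sub, ← mul_assoc, hu]; noncomm_ring
    _ = v * (u * v) := by rw [eq_sub_of_add_eq huv, mul_sub, ← mul_assoc, hv]; noncomm_ring
    _ = v * u * v := (mul_assoc v u v).symm

/-- The quadratic form `-∑ vₖ² + ∑ vₖ vₖ₊₁`, that is `-½‖∑ vₖ αₖ‖²` for simple roots `αₖ` of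
type `A`. Among the bilinear forms inducing it we choose the upper triangular one. -/
noncomputable def rootForm : QuadraticForm ℚ (ℕ →₀ ℚ) :=
  LinearMap.BilinMap.toQuadraticMap <| Finsupp.linearCombination ℚ fun k =>
    Finsupp.linearCombination ℚ fun l => if k = l then (-1 : ℚ) else if k + 1 = l then 1 else 0

lemma rootForm_single (k : ℕ) : rootForm (Finsupp.single k 1) = -1 := by
  simp [rootForm]

lemma polar_rootForm_single_succ (k : ℕ) :
    QuadraticMap.polar rootForm (Finsupp.single k 1) (Finsupp.single (k + 1) 1) = 1 := by
  have hk : k + 1 + 1 ≠ k := by omega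
  simp [rootForm, LinearMap.BilinMap.polar_toQuadraticMap, hk]

lemma polar_rootForm_single_of_lt {k l : ℕ} (hkl : k + 1 < l) :
    QuadraticMap.polar rootForm (Finsupp.single k 1) (Finsupp.single l 1) = 0 := by
  have h₁ : k ≠ l := by omega
  have h₂ : k + 1 ≠ l := by omega
  have h₃ : l + 1 ≠ k := by omega
  simp [rootForm, LinearMap.BilinMap.polar_toQuadraticMap, h₁, h₁.symm, h₂, h₃]

lemma ι_rootForm_single_sq (k : ℕ) :
    ι rootForm (Finsupp.single k 1) * ι rootForm (Finsupp.single k 1) = -1 := by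
  rw [ι_sq_scalar, rootForm_single, map_neg, map_one]

/-- The simple root `αₖ` as a unit of the Clifford algebra of `rootForm`, in which `αₖ² = -1`. -/
noncomputable def simpleRootUnit (k : ℕ) : (CliffordAlgebra rootForm)ˣ where
  val := ι rootForm (Finsupp.single k 1)
  inv := -ι rootForm (Finsupp.single k 1)
  val_inv := by rw [mul_neg, ι_rootForm_single_sq, neg_neg]
  inv_val := by rw [neg_mul, ι_rootForm_single_sq, neg_neg]

lemma spinRelations_simpleRootUnit (N : ℕ) : SpinRelations (-1) simpleRootUnit N where
  z_mul_z := by rw [neg_mul_neg, one_mul]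
  z_comm k _ := by rw [neg_one_mul, mul_neg_one]
  sq k _ := Units.ext (ι_rootForm_single_sq k)
  far k l hkl _ := Units.ext <| by
    have hanti := ι_mul_ι_add_swap (Q := rootForm) (Finsupp.single k 1) (Finsupp.single l 1)
    rw [polar_rootForm_single_of_lt hkl, map_zero] at hanti
    simpa [simpleRootUnit] using eq_neg_of_add_eq_zero_left hanti
  braid k _ := Units.ext <| mul_mul_eq_of_add_swap_eq_one (ι_rootForm_single_sq k)
    (ι_rootForm_single_sq (k + 1)) <|
      (ι_mul_ι_add_swap _ _).trans (by rw [polar_rootForm_single_succ, map_one])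

end Clifford

namespace SpinSym

section UniversalProperty

lemma ttN_of_lt {n k : ℕ} (hk : k < n - 1) : ttN n k = tt n ⟨k, hk⟩ := dif_pos hk

lemma spinRelations_ttN (n : ℕ) : SpinRelations (zt n) (ttN n) (n - 1) where
  z_mul_z := PresentedGroup.one_of_mem (rels := spinRels n) (x := zF n * zF n) (by simp [spinRels])
  z_comm k hk := by
    rw [ttN_of_lt hk]
    exact PresentedGroup.mk_eq_mk_of_mul_inv_mem
      (.inl (.inl (.inl (.inr ⟨⟨k, hk⟩, rfl⟩))))
  sq k hk := by
    rw [ttN_of_lt hk]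
    exact PresentedGroup.mk_eq_mk_of_mul_inv_mem (.inl (.inl (.inr ⟨⟨k, hk⟩, rfl⟩)))
  far k l hkl hl := by
    have hk : k < n - 1 := by omega
    rw [ttN_of_lt hk, ttN_of_lt hl]
    refine PresentedGroup.mk_eq_mk_of_mul_inv_mem
      (.inl (.inr ⟨⟨k, hk⟩, ⟨l, hl⟩, lt_abs.2 (.inr ?_), rfl⟩))
    dsimp only
    omega
  braid k hk := by
    have hk' : k < n - 1 := by omega
    rw [ttN_of_lt hk, ttN_of_lt hk']
    exact PresentedGroup.mk_eq_mk_of_mul_inv_mem (.inr ⟨⟨k, hk'⟩, ⟨k + 1, hk⟩, rfl, rfl⟩)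

lemma closure_insert_zt_image_ttN (n : ℕ) :
    Subgroup.closure (insert (zt n) (ttN n '' Set.Iio (n - 1))) = ⊤ := by
  rw [eq_top_iff, ← PresentedGroup.closure_range_of, Subgroup.closure_le]
  rintro _ ⟨i | u, rfl⟩
  · exact Subgroup.subset_closure (.inr ⟨i, i.2, ttN_of_lt i.2⟩)
  · exact Subgroup.subset_closure (.inl rfl)

variable {n : ℕ} {G : Type*} [Group G] {z : G} {t : ℕ → G}

/-- The homomorphism out of `S̃ₙ` given by its universal property. -/
def lift (ht : SpinRelations z t (n - 1)) : SpinSym n →* G :=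
  PresentedGroup.toGroup (f := Sum.elim (fun i : Fin (n - 1) => t i) fun _ => z) <| by
    rintro r ((((rfl | ⟨i, rfl⟩) | ⟨i, rfl⟩) | ⟨i, j, h, rfl⟩) | ⟨i, j, h, rfl⟩) <;>
      simp only [zF, tF, map_mul, map_inv, FreeGroup.lift_apply_of, Sum.elim_inl, Sum.elim_inr,
        mul_inv_eq_one]
    · exact ht.z_mul_z
    · exact ht.z_comm i i.2
    · exact ht.sq i i.2
    · exact ht.far_of_one_lt_abs i.2 j.2 h
    · rw [h]
      exact ht.braid i (h ▸ j.2)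

lemma lift_zt (ht : SpinRelations z t (n - 1)) : lift ht (zt n) = z := by
  rw [lift, zt, PresentedGroup.toGroup.of, Sum.elim_inr]

lemma lift_ttN (ht : SpinRelations z t (n - 1)) {k : ℕ} (hk : k < n - 1) :
    lift ht (ttN n k) = t k := by
  rw [ttN_of_lt hk, lift, tt, PresentedGroup.toGroup.of, Sum.elim_inl]

end UniversalProperty

section Center

lemma commute_zt {n : ℕ} (g : SpinSym n) : Commute (zt n) g := by
  suffices h : Subgroup.closure (insert (zt n) (ttN n '' Set.Iio (n - 1))) ≤
      Subgroup.centralizer {zt n} by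
    rw [closure_insert_zt_image_ttN] at h
    exact (Subgroup.mem_centralizer_singleton_iff.1 (h (Subgroup.mem_top g))).symm
  rw [Subgroup.closure_le]
  rintro _ (rfl | ⟨k, hk, rfl⟩)
  · exact Subgroup.mem_centralizer_singleton_iff.2 rfl
  · exact Subgroup.mem_centralizer_singleton_iff.2 ((spinRelations_ttN n).z_comm k hk).symm

instance zpowers_zt_normal (n : ℕ) : (Subgroup.zpowers (zt n)).Normal where
  conj_mem := by
    rintro _ ⟨k, rfl⟩ g
    have h : Commute (zt n ^ k) g := (commute_zt g).zpow_left k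
    exact ⟨k, by dsimp only; rw [← h.eq, mul_inv_cancel_right]⟩

lemma zt_ne_one (n : ℕ) : zt n ≠ 1 := by
  intro h
  have hunit : lift (spinRelations_simpleRootUnit (n - 1)) (zt n) = -1 := lift_zt _
  rw [h, map_one] at hunit
  have hscalar : algebraMap ℚ (CliffordAlgebra rootForm) 1 = algebraMap ℚ _ (-1) := by
    simpa using congrArg Units.val hunit
  exact absurd ((algebraMap ℚ (CliffordAlgebra rootForm)).injective hscalar) (by norm_num)

lemma orderOf_zt (n : ℕ) : orderOf (zt n) = 2 :=
  orderOf_eq_prime (by rw [pow_two, (spinRelations_ttN n).z_mul_z]) (zt_ne_one n)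

lemma zt_pow_val_add (n : ℕ) (a b : ZMod 2) :
    zt n ^ (a + b).val = zt n ^ a.val * zt n ^ b.val := by
  rw [← pow_add, ZMod.val_add, ← pow_eq_pow_mod _ (orderOf_dvd_iff_pow_eq_one.1 (orderOf_zt n).dvd)]

lemma zt_pow_val_injective (n : ℕ) : Function.Injective fun a : ZMod 2 => zt n ^ a.val :=
  fun a b h => ZMod.val_injective 2 <|
    pow_injOn_Iio_orderOf (by simpa only [Set.mem_Iio, orderOf_zt] using a.val_lt)
      (by simpa only [Set.mem_Iio, orderOf_zt] using b.val_lt) h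

lemma eq_one_or_eq_zt_of_mem_zpowers {n : ℕ} {g : SpinSym n} (hg : g ∈ Subgroup.zpowers (zt n)) :
    g = 1 ∨ g = zt n := by
  have hfin : IsOfFinOrder (zt n) := orderOf_pos_iff.1 (by rw [orderOf_zt]; norm_num)
  rw [← hfin.mem_powers_iff_mem_zpowers, hfin.mem_powers_iff_mem_range_orderOf, orderOf_zt] at hg
  simpa [Finset.range_add_one, or_comm, eq_comm] using hg

end Center

section Projection

variable {n : ℕ}

/-- The projection `p : S̃ₙ → Sₙ`, where `Sₙ` is regarded as a group of permutations of `ℕ`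
(through `viaEmbeddingHom Fin.valEmbedding`). -/
def proj (n : ℕ) : SpinSym n →* Perm ℕ := lift (spinRelations_swap (n - 1))

lemma proj_zt (n : ℕ) : proj n (zt n) = 1 := lift_zt _

lemma proj_ttN {k : ℕ} (hk : k < n - 1) : proj n (ttN n k) = swap k (k + 1) := lift_ttN _ hk

lemma ker_proj (n : ℕ) : (proj n).ker = Subgroup.zpowers (zt n) := by
  have hle : Subgroup.zpowers (zt n) ≤ (proj n).ker := Subgroup.zpowers_le.2 (proj_zt n)
  refine le_antisymm (fun g hg => ?_) hle
  let π := QuotientGroup.mk' (Subgroup.zpowers (zt n))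
  have hz : π (zt n) = 1 := (QuotientGroup.eq_one_iff _).2 (Subgroup.mem_zpowers _)
  have hgen : π g ∈ Subgroup.closure ((π ∘ ttN n) '' Set.Iio (n - 1)) := by
    rw [Set.image_comp, ← Subgroup.closure_insert_one, ← hz, ← Set.image_insert_eq,
      ← MonoidHom.map_closure, closure_insert_zt_image_ttN]
    exact Subgroup.mem_map_of_mem π (Subgroup.mem_top g)
  have hrel : SpinRelations 1 (π ∘ ttN n) (n - 1) := hz ▸ (spinRelations_ttN n).map π
  exact (QuotientGroup.eq_one_iff g).1 <|
    hrel.eq_one_of_map_eq_one (p := QuotientGroup.lift _ (proj n) hle)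
      (fun k hk => proj_ttN hk) hgen hg

lemma eq_or_eq_zt_mul_of_proj_eq {g h : SpinSym n} (hgh : proj n g = proj n h) :
    g = h ∨ g = zt n * h := by
  have hker : g * h⁻¹ ∈ (proj n).ker := by
    rw [MonoidHom.mem_ker, map_mul, map_inv, hgh, mul_inv_cancel]
  rw [ker_proj] at hker
  exact (eq_one_or_eq_zt_of_mem_zpowers hker).imp mul_inv_eq_one.1 mul_inv_eq_iff_eq_mul.1

end Projection

section LiftedTranspositions

variable {n : ℕ}

lemma ttilCore_self (n i : ℕ) : ttilCore n i i = 1 := by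
  simp [ttilCore]

lemma ttilCore_succ_self (n i : ℕ) : ttilCore n i (i + 1) = ttN n i := by
  simp [ttilCore]

lemma ttilCore_eq_conj (n : ℕ) {i j : ℕ} (hij : i + 1 < j) :
    ttilCore n i j = ttN n i * ttilCore n (i + 1) j * ttN n i := by
  obtain ⟨d, rfl⟩ : ∃ d, j = i + d + 2 := ⟨j - i - 2, by omega⟩
  have h₁ : i + d + 2 - i = d + 1 + 1 := by omega
  have h₂ : i + d + 2 - 1 - i = d + 1 := by omega
  have h₃ : i + d + 2 - (i + 1) = d + 1 := by omega
  have h₄ : i + d + 2 - 1 - (i + 1) = d := by omega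
  rw [ttilCore, ttilCore, h₁, h₂, h₃, h₄, List.range'_succ, List.range'_succ (s := i) (n := d)]
  simp [mul_assoc]

lemma proj_ttilCore {i j : ℕ} (hij : i ≤ j) (hj : j < n) :
    proj n (ttilCore n i j) = swap i j := by
  induction hij using Nat.decreasingInduction with
  | self => rw [ttilCore_self, map_one, swap_self, Perm.one_def]
  | of_succ i hij ih =>
    obtain rfl | hij : i + 1 = j ∨ i + 1 < j := by omega
    · rw [ttilCore_succ_self, proj_ttN (by omega)]
    · have hswap : swap i (i + 1) * swap (i + 1) j * swap i (i + 1) = swap i j := by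
        rw [swap_comm i (i + 1), swap_comm (i + 1) j,
          swap_mul_swap_mul_swap (by omega) (by omega)]
      rw [ttilCore_eq_conj n hij, map_mul, map_mul, ih, proj_ttN (by omega), hswap]

lemma proj_ttil {i j : ℕ} (hij : i ≤ j) (hj : j < n) : proj n (ttil n i j) = swap i j := by
  rw [ttil, if_neg hij.not_gt, proj_ttilCore hij hj]

end LiftedTranspositions

end SpinSym

lemma viaEmbeddingHom_swap {α β : Type*} [DecidableEq α] [DecidableEq β] (f : α ↪ β) (a b : α) :
    viaEmbeddingHom f (swap a b) = swap (f a) (f b) := by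
  ext y
  rw [Perm.viaEmbeddingHom_apply]
  by_cases hy : y ∈ Set.range f
  · obtain ⟨x, rfl⟩ := hy
    rw [Perm.viaEmbedding_apply, f.swap_apply]
  · rw [Perm.viaEmbedding_apply_of_notMem _ _ _ hy, swap_apply_of_ne_of_ne]
    · rintro rfl; exact hy ⟨a, rfl⟩
    · rintro rfl; exact hy ⟨b, rfl⟩

section SpinSection

open SpinSym

variable {n : ℕ}

lemma exists_isFactorization (x : Perm (Fin n)) : ∃ i, IsFactorization n x i :=
  exists_eq_prod_map_swap (List.pairwise_lt_finRange n) fun a ha => absurd (List.mem_finRange a) ha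

lemma IsFactorization.unique {x : Perm (Fin n)} {i j : Fin n → Fin n}
    (hi : IsFactorization n x i) (hj : IsFactorization n x j) : i = j :=
  funext fun k => eq_of_prod_map_swap_eq (List.pairwise_lt_finRange n) hi.1 hj.1
    (hi.2.symm.trans hj.2) k (List.mem_finRange k)

lemma IsFactorization.sec_eq {x : Perm (Fin n)} {i : Fin n → Fin n} (hi : IsFactorization n x i) :
    sec n x = ((List.finRange n).map fun k => ttil n (i k) k).prod := by
  have h : ∃ i, IsFactorization n x i := ⟨i, hi⟩
  rw [sec, dif_pos h, h.choose_spec.unique hi]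

lemma proj_sec (x : Perm (Fin n)) : proj n (sec n x) = viaEmbeddingHom Fin.valEmbedding x := by
  obtain ⟨i, hi⟩ := exists_isFactorization x
  rw [hi.sec_eq, hi.2, map_list_prod, map_list_prod, List.map_map, List.map_map]
  refine congrArg List.prod (List.map_congr_left fun k _ => ?_)
  exact (proj_ttil (hi.1 k) k.2).trans (viaEmbeddingHom_swap Fin.valEmbedding (i k) k).symm

lemma isFactorization_one (n : ℕ) : IsFactorization n 1 id :=
  ⟨fun _ => le_rfl, by simp [swap_self, ← Perm.one_def]⟩

lemma sec_one (n : ℕ) : sec n 1 = 1 := by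
  rw [(isFactorization_one n).sec_eq]
  exact List.prod_eq_one (by simp [ttil, ttilCore_self])

lemma sec_mul_sec (x y : Perm (Fin n)) :
    sec n x * sec n y = zt n ^ (coc n x y).val * sec n (x * y) := by
  by_cases h : sec n x * sec n y = sec n (x * y)
  · rw [coc, if_pos h, ZMod.val_zero, pow_zero, one_mul, h]
  · have hproj : proj n (sec n x * sec n y) = proj n (sec n (x * y)) := by
      simp only [map_mul, proj_sec]
    rw [coc, if_neg h, ZMod.val_one, pow_one]
    exact (eq_or_eq_zt_mul_of_proj_eq hproj).resolve_left h

lemma mul_self_of_proj_eq_swap {i j : Fin n} (hij : i ≠ j) {g : SpinSym n}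
    (hg : proj n g = viaEmbeddingHom Fin.valEmbedding (swap i j)) : g * g = zt n := by
  have hn : 0 < n - 1 := by omega
  have h01 : (⟨0, by omega⟩ : Fin n) ≠ ⟨1, by omega⟩ := by simp
  obtain ⟨c, hc⟩ := isConj_iff.1 (Perm.isConj_swap h01 hij)
  let τ := sec n c * ttN n 0 * (sec n c)⁻¹
  have hτ : τ * τ = zt n :=
    calc τ * τ = sec n c * (ttN n 0 * ttN n 0) * (sec n c)⁻¹ := by simp only [τ]; group
      _ = zt n := by
        rw [(spinRelations_ttN n).sq 0 hn, ← (commute_zt _).eq, mul_inv_cancel_right]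
  have hproj : proj n g = proj n τ := by
    rw [hg, ← hc, map_mul, map_mul, map_mul, map_mul, map_inv, map_inv, proj_sec, proj_ttN hn,
      viaEmbeddingHom_swap]
    rfl
  rcases eq_or_eq_zt_mul_of_proj_eq hproj with rfl | rfl
  · exact hτ
  · calc zt n * τ * (zt n * τ) = zt n * zt n * (τ * τ) := (commute_zt τ).symm.mul_mul_mul_comm _ _
      _ = zt n := by rw [hτ, (spinRelations_ttN n).z_mul_z, one_mul]

lemma coc_swap_self {i j : Fin n} (hij : i ≠ j) : coc n (swap i j) (swap i j) = 1 := by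
  rw [coc, if_neg]
  rw [mul_self_of_proj_eq_swap hij (proj_sec _), swap_mul_self, sec_one]
  exact zt_ne_one n

end SpinSection

theorem cocycle_properties (n : ℕ) (hn : 2 ≤ n) :
    (∀ x y : Equiv.Perm (Fin n),
        sec n x * sec n y = zt n ^ (coc n x y).val * sec n (x * y)) ∧
    (∀ x y w : Equiv.Perm (Fin n),
        coc n x y + coc n (x * y) w = coc n y w + coc n x (y * w)) ∧
    (∀ x : Equiv.Perm (Fin n), coc n 1 x = 0 ∧ coc n x 1 = 0) ∧
    (∀ i j : Fin n, i ≠ j → coc n (Equiv.swap i j) (Equiv.swap i j) = 1) := by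
  refine ⟨sec_mul_sec, ?_, fun x => ⟨?_, ?_⟩, fun i j => coc_swap_self⟩
  · exact cocycle_of_section (SpinSym.zt_pow_val_add n) (SpinSym.zt_pow_val_injective n)
      (fun a g => (SpinSym.commute_zt g).pow_left a.val) sec_mul_sec
  · simp [coc, sec_one]
  · simp [coc, sec_one]
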